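/- Assume 0 < ε ≤ 1/15, 0.9·d_0 ≤ d ≤ 1.1·d_0, 0.9·d_{i0} ≤ d_i ≤ 1.1·d_{i0} for all i, ρ ≥ d² + 2‖e‖², the Local RIP holds, ‖𝒜*(e)‖ ≤ εd_0/(10√2·sκ), and ‖𝒜‖ ≥ 1 where ‖𝒜‖ is the operator norm of 𝒜 from block-diagonal matrices with the Frobenius norm to ℂ^L. Then for all z = (h,x) and w = (u,v) with both z and z + w in 𝒩_ε ∩ 𝒩_F̃: ‖∇F̃(z+w) − ∇F̃(z)‖ ≤ C_L·‖w‖ with C_L = 10‖𝒜‖²d_0 + (2ρ/min_i d_{i0})·(5 + 2L/μ²). -/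

import Mathlib

noncomputable section
open Finset ComplexConjugate

namespace RGD

/-- Squared Euclidean norm of a complex vector. -/
def vnormSq {n : ℕ} (v : Fin n → ℂ) : ℝ := ∑ j, ‖v j‖ ^ 2

/-- Euclidean norm of a complex vector. -/
def vnorm {n : ℕ} (v : Fin n → ℂ) : ℝ := Real.sqrt (vnormSq v)

/-- Inner product, conjugate-linear in the first argument. -/
def vinner {n : ℕ} (u v : Fin n → ℂ) : ℂ := ∑ j, conj (u j) * v j

/-- Squared Frobenius norm of a matrix. -/
def frobSq {K N : ℕ} (Z : Matrix (Fin K) (Fin N) ℂ) : ℝ := ∑ k, ∑ j, ‖Z k j‖ ^ 2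

/-- Frobenius norm of a matrix. -/
def frob {K N : ℕ} (Z : Matrix (Fin K) (Fin N) ℂ) : ℝ := Real.sqrt (frobSq Z)

/-- Frobenius inner product `⟨U,V⟩ = Tr(U*V)`, conjugate-linear in the first argument. -/
def finner {K N : ℕ} (U V : Matrix (Fin K) (Fin N) ℂ) : ℂ := ∑ k, ∑ j, conj (U k j) * V k j

/-- Spectral (operator) norm of a matrix: sup of `‖Zv‖` over the closed unit ball. -/
def opNorm {K N : ℕ} (Z : Matrix (Fin K) (Fin N) ℂ) : ℝ :=
  sSup {r : ℝ | ∃ v : Fin N → ℂ, vnorm v ≤ 1 ∧ r = vnorm (Z.mulVec v)}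

/-- Squared Frobenius norm of a block-diagonal matrix, given by its diagonal blocks. -/
def famFrobSq {K N s : ℕ} (Z : Fin s → Matrix (Fin K) (Fin N) ℂ) : ℝ := ∑ i, frobSq (Z i)

/-- Frobenius norm of a block-diagonal matrix, given by its diagonal blocks. -/
def famFrob {K N s : ℕ} (Z : Fin s → Matrix (Fin K) (Fin N) ℂ) : ℝ := Real.sqrt (famFrobSq Z)

/-- The rank-one matrix `u v*`. -/
def rankOne {K N : ℕ} (u : Fin K → ℂ) (v : Fin N → ℂ) : Matrix (Fin K) (Fin N) ℂ :=
  Matrix.of fun k j => u k * conj (v j)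

/-- `ℋ(h,x)`: block-diagonal matrix with `i`-th block `hᵢ xᵢ*`. -/
def Hmap {K N s : ℕ} (h : Fin s → Fin K → ℂ) (x : Fin s → Fin N → ℂ) :
    Fin s → Matrix (Fin K) (Fin N) ℂ := fun i => rankOne (h i) (x i)

/-- `𝒜ᵢ(Z) = (bₗ* Z aₗ)ₗ`. -/
def calAi {K N L : ℕ} (b : Fin L → Fin K → ℂ) (a : Fin L → Fin N → ℂ)
    (Z : Matrix (Fin K) (Fin N) ℂ) : Fin L → ℂ :=
  fun l => vinner (b l) (Z.mulVec (a l))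

/-- `𝒜(Z) = Σᵢ 𝒜ᵢ(Zᵢ)` on block-diagonal matrices. -/
def calA {K N L s : ℕ} (b : Fin L → Fin K → ℂ) (a : Fin s → Fin L → Fin N → ℂ)
    (Z : Fin s → Matrix (Fin K) (Fin N) ℂ) : Fin L → ℂ :=
  fun l => ∑ i, calAi b (a i) (Z i) l

/-- `𝒜ᵢ*(z) = Σₗ zₗ bₗ aₗ*`. -/
def calAdj {K N L : ℕ} (b : Fin L → Fin K → ℂ) (a : Fin L → Fin N → ℂ)
    (z : Fin L → ℂ) : Matrix (Fin K) (Fin N) ℂ :=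
  Matrix.of fun k j => ∑ l, z l * b l k * conj (a l j)

/-- `‖𝒜*(e)‖ = maxᵢ ‖𝒜ᵢ*(e)‖` (operator norms). -/
def AadjNorm {K N L s : ℕ} (b : Fin L → Fin K → ℂ) (a : Fin s → Fin L → Fin N → ℂ)
    (e : Fin L → ℂ) : ℝ :=
  ⨆ i : Fin s, opNorm (calAdj b (a i) e)

/-- `B*B = I_K`, expressed in terms of the columns `bₗ` of `B*`. -/
def BtBeqI {K L : ℕ} (b : Fin L → Fin K → ℂ) : Prop :=
  ∀ k k' : Fin K, (∑ l, b l k * conj (b l k')) = if k = k' then (1 : ℂ) else 0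

/-- `μ ≥ μ_h`, i.e. `√L ‖B h_{i0}‖_∞ ≤ μ ‖h_{i0}‖` for all `i`. -/
def muhLe {K L s : ℕ} (b : Fin L → Fin K → ℂ) (h0 : Fin s → Fin K → ℂ) (μ : ℝ) : Prop :=
  ∀ i l, Real.sqrt L * ‖vinner (b l) (h0 i)‖ ≤ μ * vnorm (h0 i)

/-- `d₀ = √(Σᵢ d_{i0}²)`. -/
def dtot {s : ℕ} (d0 : Fin s → ℝ) : ℝ := Real.sqrt (∑ i, d0 i ^ 2)

/-- Condition number `κ = (maxᵢ d_{i0}) / (minᵢ d_{i0})`. -/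
def kappa {s : ℕ} (d0 : Fin s → ℝ) : ℝ := (⨆ i, d0 i) / (⨅ i, d0 i)

/-- The observation `y = 𝒜(ℋ(h₀,x₀)) + e`. -/
def yvec {K N L s : ℕ} (b : Fin L → Fin K → ℂ) (a : Fin s → Fin L → Fin N → ℂ)
    (h0 : Fin s → Fin K → ℂ) (x0 : Fin s → Fin N → ℂ) (e : Fin L → ℂ) : Fin L → ℂ :=
  fun l => calA b a (Hmap h0 x0) l + e l

/-- `F(h,x) = ‖𝒜(ℋ(h,x)) − y‖²`. -/
def Fobj {K N L s : ℕ} (b : Fin L → Fin K → ℂ) (a : Fin s → Fin L → Fin N → ℂ)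
    (h0 : Fin s → Fin K → ℂ) (x0 : Fin s → Fin N → ℂ) (e : Fin L → ℂ)
    (h : Fin s → Fin K → ℂ) (x : Fin s → Fin N → ℂ) : ℝ :=
  vnormSq (fun l => calA b a (Hmap h x) l - yvec b a h0 x0 e l)

def G0 (z : ℝ) : ℝ := max (z - 1) 0 ^ 2

def G0' (z : ℝ) : ℝ := 2 * max (z - 1) 0

/-- The `i`-th regularizer `Gᵢ(hᵢ,xᵢ)` (including the factor `ρ`). -/
def Gi {K N L : ℕ} (b : Fin L → Fin K → ℂ) (ρ μ di : ℝ)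
    (hi : Fin K → ℂ) (xi : Fin N → ℂ) : ℝ :=
  ρ * (G0 (vnormSq hi / (2 * di)) + G0 (vnormSq xi / (2 * di))
    + ∑ l, G0 ((L : ℝ) * ‖vinner (b l) hi‖ ^ 2 / (8 * di * μ ^ 2)))

/-- The regularizer `G(h,x) = Σᵢ Gᵢ(hᵢ,xᵢ)`. -/
def Greg {K N L s : ℕ} (b : Fin L → Fin K → ℂ) (ρ μ : ℝ) (dd : Fin s → ℝ)
    (h : Fin s → Fin K → ℂ) (x : Fin s → Fin N → ℂ) : ℝ :=
  ∑ i, Gi b ρ μ (dd i) (h i) (x i)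

/-- `F̃ = F + G`. -/
def Ftil {K N L s : ℕ} (b : Fin L → Fin K → ℂ) (a : Fin s → Fin L → Fin N → ℂ)
    (h0 : Fin s → Fin K → ℂ) (x0 : Fin s → Fin N → ℂ) (e : Fin L → ℂ)
    (ρ μ : ℝ) (dd : Fin s → ℝ)
    (h : Fin s → Fin K → ℂ) (x : Fin s → Fin N → ℂ) : ℝ :=
  Fobj b a h0 x0 e h x + Greg b ρ μ dd h x

/-- The residual `𝒜(ℋ(h,x)) − y`. -/
def residual {K N L s : ℕ} (b : Fin L → Fin K → ℂ) (a : Fin s → Fin L → Fin N → ℂ)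
    (h0 : Fin s → Fin K → ℂ) (x0 : Fin s → Fin N → ℂ) (e : Fin L → ℂ)
    (h : Fin s → Fin K → ℂ) (x : Fin s → Fin N → ℂ) : Fin L → ℂ :=
  fun l => calA b a (Hmap h x) l - yvec b a h0 x0 e l

/-- Wirtinger gradient `∇F_{hᵢ} = 𝒜ᵢ*(𝒜(ℋ(h,x)) − y) xᵢ`. -/
def gradFh {K N L s : ℕ} (b : Fin L → Fin K → ℂ) (a : Fin s → Fin L → Fin N → ℂ)
    (h0 : Fin s → Fin K → ℂ) (x0 : Fin s → Fin N → ℂ) (e : Fin L → ℂ)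
    (h : Fin s → Fin K → ℂ) (x : Fin s → Fin N → ℂ) (i : Fin s) : Fin K → ℂ :=
  (calAdj b (a i) (residual b a h0 x0 e h x)).mulVec (x i)

/-- Wirtinger gradient `∇F_{xᵢ} = (𝒜ᵢ*(𝒜(ℋ(h,x)) − y))* hᵢ`. -/
def gradFx {K N L s : ℕ} (b : Fin L → Fin K → ℂ) (a : Fin s → Fin L → Fin N → ℂ)
    (h0 : Fin s → Fin K → ℂ) (x0 : Fin s → Fin N → ℂ) (e : Fin L → ℂ)
    (h : Fin s → Fin K → ℂ) (x : Fin s → Fin N → ℂ) (i : Fin s) : Fin N → ℂ :=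
  (calAdj b (a i) (residual b a h0 x0 e h x)).conjTranspose.mulVec (h i)

/-- Wirtinger gradient `∇G_{hᵢ}`. -/
def gradGh {K L s : ℕ} (b : Fin L → Fin K → ℂ) (ρ μ : ℝ) (dd : Fin s → ℝ)
    (h : Fin s → Fin K → ℂ) (i : Fin s) : Fin K → ℂ :=
  fun k => ((ρ / (2 * dd i) : ℝ) : ℂ) *
    (((G0' (vnormSq (h i) / (2 * dd i)) : ℝ) : ℂ) * h i k
      + (((L : ℝ) / (4 * μ ^ 2) : ℝ) : ℂ) *
        ∑ l, ((G0' ((L : ℝ) * ‖vinner (b l) (h i)‖ ^ 2 / (8 * dd i * μ ^ 2)) : ℝ) : ℂ)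
          * (vinner (b l) (h i) * b l k))

/-- Wirtinger gradient `∇G_{xᵢ}`. -/
def gradGx {N s : ℕ} (ρ : ℝ) (dd : Fin s → ℝ)
    (x : Fin s → Fin N → ℂ) (i : Fin s) : Fin N → ℂ :=
  fun j => ((ρ / (2 * dd i) : ℝ) : ℂ) * (((G0' (vnormSq (x i) / (2 * dd i)) : ℝ) : ℂ) * x i j)

/-- `∇F̃_{hᵢ} = ∇F_{hᵢ} + ∇G_{hᵢ}`. -/
def gradH {K N L s : ℕ} (b : Fin L → Fin K → ℂ) (a : Fin s → Fin L → Fin N → ℂ)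
    (h0 : Fin s → Fin K → ℂ) (x0 : Fin s → Fin N → ℂ) (e : Fin L → ℂ)
    (ρ μ : ℝ) (dd : Fin s → ℝ)
    (h : Fin s → Fin K → ℂ) (x : Fin s → Fin N → ℂ) (i : Fin s) : Fin K → ℂ :=
  fun k => gradFh b a h0 x0 e h x i k + gradGh b ρ μ dd h i k

/-- `∇F̃_{xᵢ} = ∇F_{xᵢ} + ∇G_{xᵢ}`. -/
def gradX {K N L s : ℕ} (b : Fin L → Fin K → ℂ) (a : Fin s → Fin L → Fin N → ℂ)
    (h0 : Fin s → Fin K → ℂ) (x0 : Fin s → Fin N → ℂ) (e : Fin L → ℂ)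
    (ρ μ : ℝ) (dd : Fin s → ℝ)
    (h : Fin s → Fin K → ℂ) (x : Fin s → Fin N → ℂ) (i : Fin s) : Fin N → ℂ :=
  fun j => gradFx b a h0 x0 e h x i j + gradGx ρ dd x i j

/-- `‖∇F̃(h,x)‖²` (squared norm of the stacked Wirtinger gradient). -/
def gradNormSq {K N L s : ℕ} (b : Fin L → Fin K → ℂ) (a : Fin s → Fin L → Fin N → ℂ)
    (h0 : Fin s → Fin K → ℂ) (x0 : Fin s → Fin N → ℂ) (e : Fin L → ℂ)
    (ρ μ : ℝ) (dd : Fin s → ℝ)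
    (h : Fin s → Fin K → ℂ) (x : Fin s → Fin N → ℂ) : ℝ :=
  ∑ i, vnormSq (gradH b a h0 x0 e ρ μ dd h x i) + ∑ i, vnormSq (gradX b a h0 x0 e ρ μ dd h x i)

/-- `‖∇F̃(h',x') − ∇F̃(h,x)‖²`. -/
def gradDiffNormSq {K N L s : ℕ} (b : Fin L → Fin K → ℂ) (a : Fin s → Fin L → Fin N → ℂ)
    (h0 : Fin s → Fin K → ℂ) (x0 : Fin s → Fin N → ℂ) (e : Fin L → ℂ)
    (ρ μ : ℝ) (dd : Fin s → ℝ)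
    (h : Fin s → Fin K → ℂ) (x : Fin s → Fin N → ℂ)
    (h' : Fin s → Fin K → ℂ) (x' : Fin s → Fin N → ℂ) : ℝ :=
  ∑ i, vnormSq (fun k => gradH b a h0 x0 e ρ μ dd h' x' i k - gradH b a h0 x0 e ρ μ dd h x i k)
  + ∑ i, vnormSq (fun j => gradX b a h0 x0 e ρ μ dd h' x' i j - gradX b a h0 x0 e ρ μ dd h x i j)

/-- Membership in `𝒩_d`. -/
def inNd {K N s : ℕ} (d0 : Fin s → ℝ)
    (h : Fin s → Fin K → ℂ) (x : Fin s → Fin N → ℂ) : Prop :=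
  ∀ i, vnorm (h i) ≤ 2 * Real.sqrt (d0 i) ∧ vnorm (x i) ≤ 2 * Real.sqrt (d0 i)

/-- Membership in `𝒩_μ`. -/
def inNmu {K L s : ℕ} (b : Fin L → Fin K → ℂ) (d0 : Fin s → ℝ) (μ : ℝ)
    (h : Fin s → Fin K → ℂ) : Prop :=
  ∀ i, ∀ l, Real.sqrt L * ‖vinner (b l) (h i)‖ ≤ 4 * Real.sqrt (d0 i) * μ

/-- `δᵢ(hᵢ,xᵢ) = ‖hᵢxᵢ* − h_{i0}x_{i0}*‖_F / d_{i0}`. -/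
def deltaI {K N : ℕ} (h0i : Fin K → ℂ) (x0i : Fin N → ℂ) (d0i : ℝ)
    (hi : Fin K → ℂ) (xi : Fin N → ℂ) : ℝ :=
  frob (rankOne hi xi - rankOne h0i x0i) / d0i

/-- Membership in `𝒩_ε`. -/
def inNeps {K N s : ℕ} (h0 : Fin s → Fin K → ℂ) (x0 : Fin s → Fin N → ℂ)
    (d0 : Fin s → ℝ) (ε : ℝ)
    (h : Fin s → Fin K → ℂ) (x : Fin s → Fin N → ℂ) : Prop :=
  ∀ i, deltaI (h0 i) (x0 i) (d0 i) (h i) (x i) ≤ ε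

/-- The global relative error `δ(h,x) = ‖ℋ(h,x) − X₀‖_F / d₀`. -/
def deltaTot {K N s : ℕ} (h0 : Fin s → Fin K → ℂ) (x0 : Fin s → Fin N → ℂ)
    (d0 : Fin s → ℝ)
    (h : Fin s → Fin K → ℂ) (x : Fin s → Fin N → ℂ) : ℝ :=
  famFrob (fun i => Hmap h x i - Hmap h0 x0 i) / dtot d0

/-- Membership in `𝒩_F̃`. -/
def inNF {K N L s : ℕ} (b : Fin L → Fin K → ℂ) (a : Fin s → Fin L → Fin N → ℂ)
    (h0 : Fin s → Fin K → ℂ) (x0 : Fin s → Fin N → ℂ) (e : Fin L → ℂ)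
    (d0 : Fin s → ℝ) (ρ μ : ℝ) (dd : Fin s → ℝ) (ε : ℝ)
    (h : Fin s → Fin K → ℂ) (x : Fin s → Fin N → ℂ) : Prop :=
  Ftil b a h0 x0 e ρ μ dd h x ≤ ε ^ 2 * dtot d0 ^ 2 / (3 * (s : ℝ) * kappa d0 ^ 2) + vnormSq e

/-- The Local Restricted Isometry Property on `𝒩_d ∩ 𝒩_μ ∩ 𝒩_ε`. -/
def LocalRIP {K N L s : ℕ} (b : Fin L → Fin K → ℂ) (a : Fin s → Fin L → Fin N → ℂ)
    (h0 : Fin s → Fin K → ℂ) (x0 : Fin s → Fin N → ℂ)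
    (d0 : Fin s → ℝ) (μ ε : ℝ) : Prop :=
  ∀ (h : Fin s → Fin K → ℂ) (x : Fin s → Fin N → ℂ),
    inNd d0 h x → inNmu b d0 μ h → inNeps h0 x0 d0 ε h x →
      (2 / 3) * famFrobSq (fun i => Hmap h x i - Hmap h0 x0 i)
          ≤ vnormSq (calA b a fun i => Hmap h x i - Hmap h0 x0 i)
      ∧ vnormSq (calA b a fun i => Hmap h x i - Hmap h0 x0 i)
          ≤ (3 / 2) * famFrobSq (fun i => Hmap h x i - Hmap h0 x0 i)

/-- `α_{i1} = ⟨h_{i0}, hᵢ⟩ / d_{i0}`. -/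
def alpha1 {K s : ℕ} (h0 : Fin s → Fin K → ℂ) (d0 : Fin s → ℝ)
    (h : Fin s → Fin K → ℂ) (i : Fin s) : ℂ :=
  vinner (h0 i) (h i) / ((d0 i : ℝ) : ℂ)

/-- `α_{i2} = ⟨x_{i0}, xᵢ⟩ / d_{i0}`. -/
def alpha2 {N s : ℕ} (x0 : Fin s → Fin N → ℂ) (d0 : Fin s → ℝ)
    (x : Fin s → Fin N → ℂ) (i : Fin s) : ℂ :=
  vinner (x0 i) (x i) / ((d0 i : ℝ) : ℂ)

/-- `δ₀ = δ/10`. -/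
def delta0 {K N s : ℕ} (h0 : Fin s → Fin K → ℂ) (x0 : Fin s → Fin N → ℂ)
    (d0 : Fin s → ℝ) (h : Fin s → Fin K → ℂ) (x : Fin s → Fin N → ℂ) : ℝ :=
  deltaTot h0 x0 d0 h x / 10

/-- `αᵢ = (1−δ₀)α_{i1}` if `‖hᵢ‖ ≥ ‖xᵢ‖`, else `1/((1−δ₀) conj(α_{i2}))`. -/
def alphaC {K N s : ℕ} (h0 : Fin s → Fin K → ℂ) (x0 : Fin s → Fin N → ℂ)
    (d0 : Fin s → ℝ) (h : Fin s → Fin K → ℂ) (x : Fin s → Fin N → ℂ) (i : Fin s) : ℂ :=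
  if vnorm (x i) ≤ vnorm (h i)
  then ((1 - delta0 h0 x0 d0 h x : ℝ) : ℂ) * alpha1 h0 d0 h i
  else 1 / (((1 - delta0 h0 x0 d0 h x : ℝ) : ℂ) * conj (alpha2 x0 d0 x i))

/-- `Δhᵢ = hᵢ − αᵢ h_{i0}`. -/
def dh {K N s : ℕ} (h0 : Fin s → Fin K → ℂ) (x0 : Fin s → Fin N → ℂ)
    (d0 : Fin s → ℝ) (h : Fin s → Fin K → ℂ) (x : Fin s → Fin N → ℂ) (i : Fin s) :
    Fin K → ℂ :=
  fun k => h i k - alphaC h0 x0 d0 h x i * h0 i k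

/-- `Δxᵢ = xᵢ − conj(αᵢ)⁻¹ x_{i0}`. -/
def dx {K N s : ℕ} (h0 : Fin s → Fin K → ℂ) (x0 : Fin s → Fin N → ℂ)
    (d0 : Fin s → ℝ) (h : Fin s → Fin K → ℂ) (x : Fin s → Fin N → ℂ) (i : Fin s) :
    Fin N → ℂ :=
  fun j => x i j - (conj (alphaC h0 x0 d0 h x i))⁻¹ * x0 i j

/-- `σ²_max(h,x) = maxₗ Σᵢ |bₗ*hᵢ|² ‖xᵢ‖²`. -/
def sigmaMaxSq {K N L s : ℕ} (b : Fin L → Fin K → ℂ)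
    (h : Fin s → Fin K → ℂ) (x : Fin s → Fin N → ℂ) : ℝ :=
  ⨆ l : Fin L, ∑ i, ‖vinner (b l) (h i)‖ ^ 2 * vnormSq (x i)

/-- The rank-one bound (Lemma: `𝒜` on block-diagonal matrices with rank-1 blocks). -/
def RankOneBound {K N L s : ℕ} (b : Fin L → Fin K → ℂ)
    (a : Fin s → Fin L → Fin N → ℂ) : Prop :=
  ∀ (h : Fin s → Fin K → ℂ) (x : Fin s → Fin N → ℂ),
    vnormSq (calA b a (Hmap h x)) ≤
      4 / 3 * famFrobSq (Hmap h x)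
      + 2 * Real.sqrt (2 * (s : ℝ) * famFrobSq (Hmap h x) * sigmaMaxSq b h x
          * ((K : ℝ) + N) * Real.log L)
      + 8 * (s : ℝ) * sigmaMaxSq b h x * ((K : ℝ) + N) * Real.log L

/-- The subspace `Tᵢ = {h_{i0} v* + u x_{i0}*}`. -/
def Tspace {K N : ℕ} (h0i : Fin K → ℂ) (x0i : Fin N → ℂ) :
    Set (Matrix (Fin K) (Fin N) ℂ) :=
  {Z | ∃ (u : Fin K → ℂ) (v : Fin N → ℂ), Z = rankOne h0i v + rankOne u x0i}

/-- `P` is the orthogonal projection onto `Tᵢ` w.r.t. the Frobenius inner product. -/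
def IsFrobProj {K N : ℕ} (h0i : Fin K → ℂ) (x0i : Fin N → ℂ)
    (P : Matrix (Fin K) (Fin N) ℂ → Matrix (Fin K) (Fin N) ℂ) : Prop :=
  ∀ Z, P Z ∈ Tspace h0i x0i ∧ ∀ W ∈ Tspace h0i x0i, finner W (Z - P Z) = 0

/-- Operator norm of `𝒜ᵢ` from `(ℂ^{K×N}, ‖·‖_F)` to `(ℂ^L, ‖·‖)`. -/
def calAiOpNorm {K N L : ℕ} (b : Fin L → Fin K → ℂ) (a : Fin L → Fin N → ℂ) : ℝ :=
  sSup {r : ℝ | ∃ Z : Matrix (Fin K) (Fin N) ℂ, frob Z ≤ 1 ∧ r = vnorm (calAi b a Z)}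

/-- Operator norm of `𝒜` from block-diagonal matrices with `‖·‖_F` to `ℂ^L`. -/
def calAOpNorm {K N L s : ℕ} (b : Fin L → Fin K → ℂ)
    (a : Fin s → Fin L → Fin N → ℂ) : ℝ :=
  sSup {r : ℝ | ∃ Z : Fin s → Matrix (Fin K) (Fin N) ℂ, famFrob Z ≤ 1 ∧ r = vnorm (calA b a Z)}

/-- Norm of a stacked vector in `ℂ^{ns}`. -/
def stackNorm {n s : ℕ} (u : Fin s → Fin n → ℂ) : ℝ := Real.sqrt (∑ i, vnormSq (u i))

/-- Norm of a point `z = (h,x) ∈ ℂ^{s(K+N)}`. -/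
def pairNorm {K N s : ℕ} (u : Fin s → Fin K → ℂ) (v : Fin s → Fin N → ℂ) : ℝ :=
  Real.sqrt (∑ i, vnormSq (u i) + ∑ i, vnormSq (v i))

/-- `z + t • w` componentwise, `t` real. -/
def shiftV {n s : ℕ} (u w : Fin s → Fin n → ℂ) (t : ℝ) : Fin s → Fin n → ℂ :=
  fun i k => u i k + (t : ℂ) * w i k

/-- `σ_max(h) = maxₗ √(Σᵢ |bₗ*hᵢ|²)` (unit `xᵢ`'s). -/
def sigmaMaxU {K L s : ℕ} (b : Fin L → Fin K → ℂ) (h : Fin s → Fin K → ℂ) : ℝ :=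
  ⨆ l, Real.sqrt (∑ i, ‖vinner (b l) (h i)‖ ^ 2)

/-! ### Euclidean norms -/

lemma norm_sum_mul_sq_le {ι : Type*} [Fintype ι] (f g : ι → ℂ) :
    ‖∑ i, f i * g i‖ ^ 2 ≤ (∑ i, ‖f i‖ ^ 2) * ∑ i, ‖g i‖ ^ 2 := by
  refine le_trans ?_ (Finset.sum_mul_sq_le_sq_mul_sq univ (fun i => ‖f i‖) fun i => ‖g i‖)
  refine pow_le_pow_left₀ (norm_nonneg _) ((norm_sum_le _ _).trans_eq ?_) 2
  simp

lemma vnormSq_nonneg {n : ℕ} (v : Fin n → ℂ) : 0 ≤ vnormSq v :=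
  Finset.sum_nonneg fun _ _ => sq_nonneg _

lemma vnorm_nonneg {n : ℕ} (v : Fin n → ℂ) : 0 ≤ vnorm v := Real.sqrt_nonneg _

lemma vnorm_sq {n : ℕ} (v : Fin n → ℂ) : vnorm v ^ 2 = vnormSq v :=
  Real.sq_sqrt (vnormSq_nonneg v)

lemma vnorm_eq_norm {n : ℕ} (v : Fin n → ℂ) :
    vnorm v = ‖(WithLp.toLp 2 v : EuclideanSpace ℂ (Fin n))‖ := by
  simp [vnorm, vnormSq, EuclideanSpace.norm_eq]

lemma vnorm_add_le {n : ℕ} (v w : Fin n → ℂ) : vnorm (v + w) ≤ vnorm v + vnorm w := by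
  simp only [vnorm_eq_norm, WithLp.toLp_add]
  exact norm_add_le _ _

lemma vnorm_sub_le {n : ℕ} (v w : Fin n → ℂ) : vnorm (v - w) ≤ vnorm v + vnorm w := by
  simp only [vnorm_eq_norm, WithLp.toLp_sub]
  exact norm_sub_le _ _

lemma vnorm_smul {n : ℕ} (c : ℂ) (v : Fin n → ℂ) : vnorm (c • v) = ‖c‖ * vnorm v := by
  simp only [vnorm_eq_norm, WithLp.toLp_smul, norm_smul]

lemma frobSq_nonneg {K N : ℕ} (Z : Matrix (Fin K) (Fin N) ℂ) : 0 ≤ frobSq Z :=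
  Finset.sum_nonneg fun _ _ => Finset.sum_nonneg fun _ _ => sq_nonneg _

lemma famFrobSq_nonneg {K N s : ℕ} (Z : Fin s → Matrix (Fin K) (Fin N) ℂ) : 0 ≤ famFrobSq Z :=
  Finset.sum_nonneg fun _ _ => frobSq_nonneg _

lemma frobSq_le_famFrobSq {K N s : ℕ} (Z : Fin s → Matrix (Fin K) (Fin N) ℂ) (i : Fin s) :
    frobSq (Z i) ≤ famFrobSq Z :=
  Finset.single_le_sum (f := fun i => frobSq (Z i)) (fun _ _ => frobSq_nonneg _) (mem_univ i)

lemma famFrobSq_eq_sum_prod {K N s : ℕ} (Z : Fin s → Matrix (Fin K) (Fin N) ℂ) :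
    famFrobSq Z = ∑ p : Fin s × Fin K × Fin N, ‖Z p.1 p.2.1 p.2.2‖ ^ 2 := by
  simp [famFrobSq, frobSq, Fintype.sum_prod_type]

lemma vnormSq_mulVec_le {K N : ℕ} (M : Matrix (Fin K) (Fin N) ℂ) (v : Fin N → ℂ) :
    vnormSq (M.mulVec v) ≤ frobSq M * vnormSq v := by
  unfold vnormSq frobSq
  rw [Finset.sum_mul]
  exact Finset.sum_le_sum fun k _ => norm_sum_mul_sq_le _ _

lemma frobSq_conjTranspose {K N : ℕ} (M : Matrix (Fin K) (Fin N) ℂ) :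
    frobSq M.conjTranspose = frobSq M := by
  unfold frobSq
  rw [Finset.sum_comm]
  simp

lemma frobSq_rankOne {K N : ℕ} (u : Fin K → ℂ) (v : Fin N → ℂ) :
    frobSq (rankOne u v) = vnormSq u * vnormSq v := by
  simp [frobSq, rankOne, vnormSq, Finset.sum_mul_sum, mul_pow]

lemma frobSq_add_le {K N : ℕ} (U V : Matrix (Fin K) (Fin N) ℂ) :
    frobSq (U + V) ≤ 2 * (frobSq U + frobSq V) := by
  simp only [frobSq, ← Finset.sum_add_distrib, Finset.mul_sum]
  refine Finset.sum_le_sum fun k _ => Finset.sum_le_sum fun j _ => ?_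
  have := norm_add_le (U k j) (V k j)
  rw [Matrix.add_apply]
  nlinarith [sq_nonneg (‖U k j‖ - ‖V k j‖), norm_nonneg (U k j + V k j)]

/-- The stacked vector `(u, v)` as an element of a single Euclidean space. -/
def stackedPair {K N s : ℕ} (u : Fin s → Fin K → ℂ) (v : Fin s → Fin N → ℂ) :
    EuclideanSpace ℂ ((Fin s × Fin K) ⊕ (Fin s × Fin N)) :=
  WithLp.toLp 2 (Sum.elim (fun p => u p.1 p.2) fun p => v p.1 p.2)

lemma pairNorm_eq_norm {K N s : ℕ} (u : Fin s → Fin K → ℂ) (v : Fin s → Fin N → ℂ) :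
    pairNorm u v = ‖stackedPair u v‖ := by
  simp [pairNorm, stackedPair, vnormSq, EuclideanSpace.norm_eq, Fintype.sum_prod_type]

lemma pairNorm_nonneg {K N s : ℕ} (u : Fin s → Fin K → ℂ) (v : Fin s → Fin N → ℂ) :
    0 ≤ pairNorm u v := Real.sqrt_nonneg _

lemma pairNorm_sq {K N s : ℕ} (u : Fin s → Fin K → ℂ) (v : Fin s → Fin N → ℂ) :
    pairNorm u v ^ 2 = ∑ i, vnormSq (u i) + ∑ i, vnormSq (v i) :=
  Real.sq_sqrt (add_nonneg (Finset.sum_nonneg fun _ _ => vnormSq_nonneg _)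
    (Finset.sum_nonneg fun _ _ => vnormSq_nonneg _))

lemma pairNorm_add_le {K N s : ℕ} (u u' : Fin s → Fin K → ℂ) (v v' : Fin s → Fin N → ℂ) :
    pairNorm (u + u') (v + v') ≤ pairNorm u v + pairNorm u' v' := by
  have h : stackedPair (u + u') (v + v') = stackedPair u v + stackedPair u' v' := by
    ext p
    rcases p with p | p <;> simp [stackedPair]
  simp only [pairNorm_eq_norm, h]
  exact norm_add_le _ _

lemma pairNorm_le_mul {K N K' N' s : ℕ} {p : Fin s → Fin K → ℂ} {q : Fin s → Fin N → ℂ}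
    {u : Fin s → Fin K' → ℂ} {v : Fin s → Fin N' → ℂ} {C : ℝ} (hC : 0 ≤ C)
    (hp : ∀ i, vnorm (p i) ≤ C * vnorm (u i)) (hq : ∀ i, vnorm (q i) ≤ C * vnorm (v i)) :
    pairNorm p q ≤ C * pairNorm u v := by
  refine abs_le_of_sq_le_sq' ?_ (mul_nonneg hC (pairNorm_nonneg _ _)) |>.2
  rw [mul_pow, pairNorm_sq, pairNorm_sq, mul_add, Finset.mul_sum, Finset.mul_sum]
  simp only [← vnorm_sq, ← mul_pow]
  exact add_le_add
    (Finset.sum_le_sum fun i _ => pow_le_pow_left₀ (vnorm_nonneg _) (hp i) 2)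
    (Finset.sum_le_sum fun i _ => pow_le_pow_left₀ (vnorm_nonneg _) (hq i) 2)

/-! ### The measurement operator and its adjoint -/

section Measurement

variable {K N L s : ℕ} (b : Fin L → Fin K → ℂ) (a : Fin s → Fin L → Fin N → ℂ)

lemma calA_eq_sum_prod (Z : Fin s → Matrix (Fin K) (Fin N) ℂ) (l : Fin L) :
    calA b a Z l = ∑ p : Fin s × Fin K × Fin N,
      (conj (b l p.2.1) * a p.1 l p.2.2) * Z p.1 p.2.1 p.2.2 := by
  simp only [calA, calAi, vinner, Matrix.mulVec, dotProduct, Fintype.sum_prod_type,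
    Finset.mul_sum]
  refine Finset.sum_congr rfl fun i _ => Finset.sum_congr rfl fun k _ =>
    Finset.sum_congr rfl fun j _ => ?_
  ring

lemma calA_sub (Z W : Fin s → Matrix (Fin K) (Fin N) ℂ) :
    calA b a (Z - W) = calA b a Z - calA b a W := by
  ext l
  simp only [calA_eq_sum_prod, Pi.sub_apply, Matrix.sub_apply, mul_sub, Finset.sum_sub_distrib]

lemma calA_smul (c : ℂ) (Z : Fin s → Matrix (Fin K) (Fin N) ℂ) :
    calA b a (c • Z) = c • calA b a Z := by
  ext l
  simp only [calA_eq_sum_prod, Pi.smul_apply, Matrix.smul_apply, smul_eq_mul, Finset.mul_sum]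
  exact Finset.sum_congr rfl fun p _ => by ring

lemma famFrobSq_smul (c : ℂ) (Z : Fin s → Matrix (Fin K) (Fin N) ℂ) :
    famFrobSq (c • Z) = ‖c‖ ^ 2 * famFrobSq Z := by
  simp [famFrobSq_eq_sum_prod, mul_pow, Finset.mul_sum]

lemma exists_vnormSq_calA_le : ∃ C : ℝ, 0 ≤ C ∧
    ∀ Z : Fin s → Matrix (Fin K) (Fin N) ℂ, vnormSq (calA b a Z) ≤ C * famFrobSq Z := by
  refine ⟨∑ l, ∑ p : Fin s × Fin K × Fin N, ‖conj (b l p.2.1) * a p.1 l p.2.2‖ ^ 2,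
    Finset.sum_nonneg fun _ _ => Finset.sum_nonneg fun _ _ => sq_nonneg _, fun Z => ?_⟩
  rw [vnormSq, Finset.sum_mul, famFrobSq_eq_sum_prod]
  refine Finset.sum_le_sum fun l _ => ?_
  rw [calA_eq_sum_prod]
  exact norm_sum_mul_sq_le _ _

lemma calAOpNorm_nonneg : 0 ≤ calAOpNorm b a :=
  Real.sSup_nonneg (by rintro _ ⟨Z, -, rfl⟩; exact vnorm_nonneg _)

lemma vnorm_calA_le (Z : Fin s → Matrix (Fin K) (Fin N) ℂ) :
    vnorm (calA b a Z) ≤ calAOpNorm b a * famFrob Z := by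
  obtain ⟨C, hC, hCZ⟩ := exists_vnormSq_calA_le b a
  have hbdd : BddAbove {r : ℝ | ∃ Z : Fin s → Matrix (Fin K) (Fin N) ℂ,
      famFrob Z ≤ 1 ∧ r = vnorm (calA b a Z)} := by
    refine ⟨Real.sqrt C, ?_⟩
    rintro _ ⟨Z, hZ, rfl⟩
    refine Real.sqrt_le_sqrt ((hCZ Z).trans ?_)
    have : famFrobSq Z ≤ 1 := by simpa [famFrob] using hZ
    nlinarith
  rcases (Real.sqrt_nonneg (famFrobSq Z)).eq_or_lt with h0 | hpos
  · have hz : famFrobSq Z = 0 := (Real.sqrt_eq_zero (famFrobSq_nonneg Z)).1 h0.symm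
    have h1 : vnormSq (calA b a Z) ≤ 0 := by simpa [hz] using hCZ Z
    rw [vnorm, Real.sqrt_eq_zero_of_nonpos h1]
    exact mul_nonneg (calAOpNorm_nonneg b a) (Real.sqrt_nonneg _)
  · change 0 < famFrob Z at hpos
    have hc : ‖(((famFrob Z)⁻¹ : ℝ) : ℂ)‖ = (famFrob Z)⁻¹ := by
      rw [Complex.norm_real, Real.norm_of_nonneg (inv_nonneg.2 hpos.le)]
    have h1 : famFrob ((((famFrob Z)⁻¹ : ℝ) : ℂ) • Z) = 1 := by
      rw [famFrob, famFrobSq_smul, hc, Real.sqrt_mul (sq_nonneg _),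
        Real.sqrt_sq (inv_nonneg.2 hpos.le)]
      exact inv_mul_cancel₀ hpos.ne'
    have h2 := le_csSup hbdd ⟨_, h1.le, rfl⟩
    rw [calA_smul, vnorm_smul, hc, inv_mul_le_iff₀ hpos, mul_comm] at h2
    exact h2

lemma vnormSq_calA_le (Z : Fin s → Matrix (Fin K) (Fin N) ℂ) :
    vnormSq (calA b a Z) ≤ calAOpNorm b a ^ 2 * famFrobSq Z := by
  rw [← vnorm_sq, ← Real.sq_sqrt (famFrobSq_nonneg Z), ← mul_pow]
  exact pow_le_pow_left₀ (vnorm_nonneg _) (vnorm_calA_le b a Z) 2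

lemma famFrobSq_calAdj_eq (z : Fin L → ℂ) :
    (famFrobSq (fun i => calAdj b (a i) z) : ℂ)
      = ∑ l, conj (calA b a (fun i => calAdj b (a i) z) l) * z l := by
  have h1 : (famFrobSq (fun i => calAdj b (a i) z) : ℂ)
      = ∑ p : Fin s × Fin K × Fin N, conj (calAdj b (a p.1) z p.2.1 p.2.2) *
          ∑ l, z l * b l p.2.1 * conj (a p.1 l p.2.2) := by
    rw [famFrobSq_eq_sum_prod]
    push_cast
    refine Finset.sum_congr rfl fun p _ => ?_
    rw [← Complex.conj_mul']
    simp [calAdj]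
  rw [h1]
  simp only [calA_eq_sum_prod, map_sum, Finset.mul_sum, Finset.sum_mul, map_mul,
    Complex.conj_conj]
  rw [Finset.sum_comm]
  exact Finset.sum_congr rfl fun l _ => Finset.sum_congr rfl fun p _ => by ring

lemma famFrobSq_calAdj_le (z : Fin L → ℂ) :
    famFrobSq (fun i => calAdj b (a i) z) ≤ calAOpNorm b a ^ 2 * vnormSq z := by
  set M := fun i => calAdj b (a i) z with hM
  have h1 : famFrobSq M ^ 2 ≤ vnormSq (calA b a M) * vnormSq z := by
    have h2 := norm_sum_mul_sq_le (fun l => conj (calA b a M l)) z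
    rw [← famFrobSq_calAdj_eq, Complex.norm_real, Real.norm_eq_abs, sq_abs] at h2
    simpa [vnormSq] using h2
  have h3 := vnormSq_calA_le b a M
  have h4 := vnormSq_nonneg z
  rcases (famFrobSq_nonneg M).eq_or_lt with h0 | hpos
  · rw [← h0]
    positivity
  · refine le_of_mul_le_mul_left ?_ hpos
    nlinarith [mul_le_mul_of_nonneg_right h3 h4]

end Measurement

/-! ### Isometry `B` and its adjoint -/

section Isometry

variable {K L : ℕ} {b : Fin L → Fin K → ℂ}

lemma vnormSq_vinner_eq (hb : BtBeqI b) (u : Fin K → ℂ) :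
    vnormSq (fun l => vinner (b l) u) = vnormSq u := by
  have h : ((vnormSq (fun l => vinner (b l) u) : ℝ) : ℂ) = (vnormSq u : ℝ) := by
    simp only [vnormSq, Complex.ofReal_sum, Complex.ofReal_pow, ← Complex.conj_mul', vinner,
      map_sum, map_mul, Complex.conj_conj, Finset.sum_mul_sum]
    rw [Finset.sum_comm]
    refine Finset.sum_congr rfl fun k _ => ?_
    rw [Finset.sum_comm]
    have h1 : ∀ k', (∑ l, b l k * conj (u k) * (conj (b l k') * u k'))
        = (conj (u k) * u k') * if k = k' then (1 : ℂ) else 0 := fun k' => by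
      rw [← hb k k', Finset.mul_sum]
      exact Finset.sum_congr rfl fun l _ => by ring
    simp [h1]
  exact_mod_cast h

lemma vnormSq_sum_mul_le (hb : BtBeqI b) (c : Fin L → ℂ) :
    vnormSq (fun k => ∑ l, c l * b l k) ≤ vnormSq c := by
  set p := fun k => ∑ l, c l * b l k with hp
  have h1 : ((vnormSq p : ℝ) : ℂ) = ∑ l, conj (vinner (b l) p) * c l := by
    simp only [vnormSq, Complex.ofReal_sum, Complex.ofReal_pow, ← Complex.conj_mul', vinner,
      map_sum, map_mul, Complex.conj_conj, Finset.sum_mul]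
    rw [Finset.sum_comm]
    refine Finset.sum_congr rfl fun k _ => ?_
    conv_lhs => rw [hp]
    simp only [Finset.mul_sum]
    exact Finset.sum_congr rfl fun l _ => by ring
  have h2 := norm_sum_mul_sq_le (fun l => conj (vinner (b l) p)) c
  rw [← h1, Complex.norm_real, Real.norm_eq_abs, sq_abs] at h2
  have h3 : vnormSq p ^ 2 ≤ vnormSq p * vnormSq c := by
    have h4 := vnormSq_vinner_eq hb p
    rw [vnormSq] at h4
    simp only [RCLike.norm_conj, h4] at h2
    exact h2
  rcases (vnormSq_nonneg p).eq_or_lt with h0 | hpos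
  · rw [← h0]
    exact vnormSq_nonneg c
  · exact le_of_mul_le_mul_left (by nlinarith) hpos

end Isometry

/-! ### The regularizer -/

lemma norm_G0'_smul_sub_le {E : Type*} [NormedAddCommGroup E] [NormedSpace ℝ E] {c : ℝ}
    (hc : 0 ≤ c) {z w : E} (hz : c * ‖z‖ ^ 2 ≤ 20 / 9) (hw : c * ‖w‖ ^ 2 ≤ 20 / 9) :
    ‖G0' (c * ‖w‖ ^ 2) • w - G0' (c * ‖z‖ ^ 2) • z‖ ≤ 34 / 3 * ‖w - z‖ := by
  have hsplit : G0' (c * ‖w‖ ^ 2) • w - G0' (c * ‖z‖ ^ 2) • z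
      = G0' (c * ‖w‖ ^ 2) • (w - z) + (G0' (c * ‖w‖ ^ 2) - G0' (c * ‖z‖ ^ 2)) • z := by
    module
  have hD : |‖w‖ - ‖z‖| ≤ ‖w - z‖ := abs_norm_sub_norm_le w z
  have h1 : |G0' (c * ‖w‖ ^ 2)| ≤ 22 / 9 := by
    rw [G0', abs_of_nonneg (by positivity)]
    linarith [max_le (by linarith : c * ‖w‖ ^ 2 - 1 ≤ 11 / 9) (by norm_num : (0 : ℝ) ≤ 11 / 9)]
  have h2 : |G0' (c * ‖w‖ ^ 2) - G0' (c * ‖z‖ ^ 2)|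
      ≤ 2 * (c * ((‖w‖ + ‖z‖) * ‖w - z‖)) := by
    have h3 := abs_max_sub_max_le_abs (c * ‖w‖ ^ 2 - 1) (c * ‖z‖ ^ 2 - 1) 0
    have h4 : |(c * ‖w‖ ^ 2 - 1) - (c * ‖z‖ ^ 2 - 1)| ≤ c * ((‖w‖ + ‖z‖) * ‖w - z‖) := by
      rw [show (c * ‖w‖ ^ 2 - 1) - (c * ‖z‖ ^ 2 - 1) = c * ((‖w‖ + ‖z‖) * (‖w‖ - ‖z‖)) by ring,
        abs_mul, abs_mul, abs_of_nonneg hc, abs_of_nonneg (by positivity : 0 ≤ ‖w‖ + ‖z‖)]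
      gcongr
    rw [G0', G0', ← mul_sub, abs_mul, abs_two]
    linarith
  have h5 : c * ((‖w‖ + ‖z‖) * ‖z‖) ≤ 40 / 9 := by
    nlinarith [mul_nonneg hc (sq_nonneg (‖w‖ - ‖z‖))]
  calc _ ≤ |G0' (c * ‖w‖ ^ 2)| * ‖w - z‖
        + |G0' (c * ‖w‖ ^ 2) - G0' (c * ‖z‖ ^ 2)| * ‖z‖ := by
        rw [hsplit]
        refine (norm_add_le _ _).trans_eq ?_
        rw [norm_smul, norm_smul, Real.norm_eq_abs, Real.norm_eq_abs]
    _ ≤ 22 / 9 * ‖w - z‖ + 2 * (c * ((‖w‖ + ‖z‖) * ‖w - z‖)) * ‖z‖ := by gcongr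
    _ = 22 / 9 * ‖w - z‖ + 2 * (c * ((‖w‖ + ‖z‖) * ‖z‖)) * ‖w - z‖ := by ring
    _ ≤ 22 / 9 * ‖w - z‖ + 2 * (40 / 9) * ‖w - z‖ := by gcongr
    _ = 34 / 3 * ‖w - z‖ := by ring

lemma vnorm_G0'_smul_sub_le {n : ℕ} {D : ℝ} (hD : 0 < D) {z w : Fin n → ℂ}
    (hz : vnormSq z / D ≤ 20 / 9) (hw : vnormSq w / D ≤ 20 / 9) :
    vnorm (((G0' (vnormSq w / D) : ℝ) : ℂ) • w - ((G0' (vnormSq z / D) : ℝ) : ℂ) • z)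
      ≤ 34 / 3 * vnorm (w - z) := by
  rw [div_eq_inv_mul, ← vnorm_sq] at hz hw
  rw [div_eq_inv_mul, div_eq_inv_mul, ← vnorm_sq, ← vnorm_sq]
  simp only [vnorm_eq_norm, WithLp.toLp_sub, WithLp.toLp_smul, Complex.coe_smul] at hz hw ⊢
  exact norm_G0'_smul_sub_le (inv_nonneg.2 hD.le) hz hw

lemma le_of_G0_le {t : ℝ} (h : G0 t ≤ 1 / 2) : t ≤ 9 / 5 := by
  unfold G0 at h
  by_contra! ht
  have : t - 1 ≤ max (t - 1) 0 := le_max_left _ _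
  nlinarith

lemma G0_nonneg (t : ℝ) : 0 ≤ G0 t := sq_nonneg _

/-- The three bounds enforced on a component by a small value of its regularizer. -/
structure RegBounded {K N L : ℕ} (b : Fin L → Fin K → ℂ) (μ di : ℝ)
    (hi : Fin K → ℂ) (xi : Fin N → ℂ) : Prop where
  left : vnormSq hi / (2 * di) ≤ 9 / 5
  right : vnormSq xi / (2 * di) ≤ 9 / 5
  coherence : ∀ l, (L : ℝ) * ‖vinner (b l) hi‖ ^ 2 / (8 * di * μ ^ 2) ≤ 9 / 5

lemma regBounded_of_Gi_le {K N L : ℕ} {b : Fin L → Fin K → ℂ} {ρ μ di : ℝ}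
    {hi : Fin K → ℂ} {xi : Fin N → ℂ} (hρ : 0 < ρ) (h : Gi b ρ μ di hi xi ≤ ρ / 2) :
    RegBounded b μ di hi xi := by
  have h1 := G0_nonneg (vnormSq hi / (2 * di))
  have h2 := G0_nonneg (vnormSq xi / (2 * di))
  have h3 : ∀ l, 0 ≤ G0 ((L : ℝ) * ‖vinner (b l) hi‖ ^ 2 / (8 * di * μ ^ 2)) :=
    fun l => G0_nonneg _
  have h4 := Finset.sum_nonneg fun l (_ : l ∈ (univ : Finset (Fin L))) => h3 l
  have h5 : G0 (vnormSq hi / (2 * di)) + G0 (vnormSq xi / (2 * di))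
      + ∑ l, G0 ((L : ℝ) * ‖vinner (b l) hi‖ ^ 2 / (8 * di * μ ^ 2)) ≤ 1 / 2 :=
    le_of_mul_le_mul_left (by rw [Gi] at h; linarith) hρ
  refine ⟨le_of_G0_le (by linarith), le_of_G0_le (by linarith), fun l => le_of_G0_le ?_⟩
  have := Finset.single_le_sum (fun l _ => h3 l) (mem_univ l)
  linarith

lemma dtot_sq {s : ℕ} (d0 : Fin s → ℝ) : dtot d0 ^ 2 = ∑ i, d0 i ^ 2 :=
  Real.sq_sqrt (Finset.sum_nonneg fun _ _ => sq_nonneg _)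

lemma le_dtot {s : ℕ} (d0 : Fin s → ℝ) (i : Fin s) : d0 i ≤ dtot d0 :=
  Real.le_sqrt_of_sq_le
    (Finset.single_le_sum (f := fun i => d0 i ^ 2) (fun _ _ => sq_nonneg _) (mem_univ i))

lemma iInf_pos_of_forall_pos {s : ℕ} (hs : 0 < s) {d0 : Fin s → ℝ} (hd0 : ∀ i, 0 < d0 i) :
    0 < ⨅ i, d0 i := by
  have : Nonempty (Fin s) := ⟨⟨0, hs⟩⟩
  obtain ⟨i, hi⟩ := exists_eq_ciInf_of_finite (f := d0)
  exact hi ▸ hd0 i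

lemma iInf_le_apply {s : ℕ} (d0 : Fin s → ℝ) (i : Fin s) : ⨅ i, d0 i ≤ d0 i :=
  ciInf_le (Set.finite_range d0).bddBelow i

lemma one_le_kappa {s : ℕ} (hs : 0 < s) {d0 : Fin s → ℝ} (hd0 : ∀ i, 0 < d0 i) :
    1 ≤ kappa d0 := by
  rw [kappa, one_le_div (iInf_pos_of_forall_pos hs hd0)]
  exact (iInf_le_apply d0 ⟨0, hs⟩).trans (le_ciSup (Set.finite_range d0).bddAbove ⟨0, hs⟩)

lemma regBounded_of_inNF {K N L s : ℕ} (hs : 0 < s) {b : Fin L → Fin K → ℂ}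
    {a : Fin s → Fin L → Fin N → ℂ} {h0 : Fin s → Fin K → ℂ} {x0 : Fin s → Fin N → ℂ}
    {e : Fin L → ℂ} {d0 dd : Fin s → ℝ} {ρ μ ε : ℝ}
    (hd0 : ∀ i, 0 < d0 i) (hε : 0 < ε) (hε15 : ε ≤ 1 / 15)
    (hρ : 0.81 * dtot d0 ^ 2 + 2 * vnormSq e ≤ ρ)
    {h : Fin s → Fin K → ℂ} {x : Fin s → Fin N → ℂ}
    (hF : inNF b a h0 x0 e d0 ρ μ dd ε h x) (i : Fin s) :
    RegBounded b μ (dd i) (h i) (x i) := by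
  have hdpos : 0 < dtot d0 := (hd0 ⟨0, hs⟩).trans_le (le_dtot d0 _)
  have he := vnormSq_nonneg e
  have hρpos : 0 < ρ := by nlinarith [pow_pos hdpos 2]
  have hGi : ∀ j, 0 ≤ Gi b ρ μ (dd j) (h j) (x j) := fun j =>
    mul_nonneg hρpos.le (add_nonneg (add_nonneg (G0_nonneg _) (G0_nonneg _))
      (Finset.sum_nonneg fun _ _ => G0_nonneg _))
  have h1 : Gi b ρ μ (dd i) (h i) (x i) ≤ Ftil b a h0 x0 e ρ μ dd h x :=
    (Finset.single_le_sum (f := fun j => Gi b ρ μ (dd j) (h j) (x j)) (fun j _ => hGi j)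
      (mem_univ i)).trans (le_add_of_nonneg_left (vnormSq_nonneg _))
  have hs1 : (1 : ℝ) ≤ s := by exact_mod_cast hs
  have hκ := one_le_kappa hs hd0
  have h2 : ε ^ 2 * dtot d0 ^ 2 / (3 * (s : ℝ) * kappa d0 ^ 2) ≤ dtot d0 ^ 2 / 3 := by
    have h3 : (1 : ℝ) ≤ s * kappa d0 ^ 2 := one_le_mul_of_one_le_of_one_le hs1 (one_le_pow₀ hκ)
    have h4 : ε ^ 2 ≤ 1 := pow_le_one₀ hε.le (by linarith)
    refine div_le_div₀ (sq_nonneg _) (mul_le_of_le_one_left (sq_nonneg _) h4) three_pos ?_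
    linarith
  refine regBounded_of_Gi_le hρpos ((h1.trans hF).trans ?_)
  nlinarith [sq_nonneg (dtot d0)]

lemma vnorm_gradGx_sub_le {N s : ℕ} {ρ : ℝ} {dd : Fin s → ℝ} {x x' : Fin s → Fin N → ℂ}
    {i : Fin s} (hρ : 0 ≤ ρ) (hdd : 0 < dd i) (hx : vnormSq (x i) / (2 * dd i) ≤ 20 / 9)
    (hx' : vnormSq (x' i) / (2 * dd i) ≤ 20 / 9) :
    vnorm (gradGx ρ dd x' i - gradGx ρ dd x i)
      ≤ ρ / (2 * dd i) * (34 / 3) * vnorm (x' i - x i) := by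
  have h : gradGx ρ dd x' i - gradGx ρ dd x i = ((ρ / (2 * dd i) : ℝ) : ℂ) •
      (((G0' (vnormSq (x' i) / (2 * dd i)) : ℝ) : ℂ) • x' i
        - ((G0' (vnormSq (x i) / (2 * dd i)) : ℝ) : ℂ) • x i) := by
    ext j
    simp only [gradGx, Pi.sub_apply, Pi.smul_apply, smul_eq_mul]
    ring
  have hc : 0 ≤ ρ / (2 * dd i) := by positivity
  rw [h, vnorm_smul, Complex.norm_real, Real.norm_of_nonneg hc, mul_assoc]
  exact mul_le_mul_of_nonneg_left (vnorm_G0'_smul_sub_le (by positivity) hx hx') hc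

lemma vnorm_gradGh_sub_le {K L s : ℕ} {b : Fin L → Fin K → ℂ} (hb : BtBeqI b) {ρ μ : ℝ}
    {dd : Fin s → ℝ} {h h' : Fin s → Fin K → ℂ} {i : Fin s} (hρ : 0 ≤ ρ) (hdd : 0 < dd i)
    (hh : vnormSq (h i) / (2 * dd i) ≤ 20 / 9) (hh' : vnormSq (h' i) / (2 * dd i) ≤ 20 / 9)
    (hl : ∀ l, (L : ℝ) * ‖vinner (b l) (h i)‖ ^ 2 / (8 * dd i * μ ^ 2) ≤ 20 / 9)
    (hl' : ∀ l, (L : ℝ) * ‖vinner (b l) (h' i)‖ ^ 2 / (8 * dd i * μ ^ 2) ≤ 20 / 9) :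
    vnorm (gradGh b ρ μ dd h' i - gradGh b ρ μ dd h i)
      ≤ ρ / (2 * dd i) * (34 / 3 + L / (4 * μ ^ 2) * (34 / 3)) * vnorm (h' i - h i) := by
  set g : (Fin K → ℂ) → Fin L → ℂ := fun w l =>
    ((G0' ((L : ℝ) * ‖vinner (b l) w‖ ^ 2 / (8 * dd i * μ ^ 2)) : ℝ) : ℂ) * vinner (b l) w with hg
  have hsplit : gradGh b ρ μ dd h' i - gradGh b ρ μ dd h i = ((ρ / (2 * dd i) : ℝ) : ℂ) •
      ((((G0' (vnormSq (h' i) / (2 * dd i)) : ℝ) : ℂ) • h' i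
        - ((G0' (vnormSq (h i) / (2 * dd i)) : ℝ) : ℂ) • h i)
      + (((L : ℝ) / (4 * μ ^ 2) : ℝ) : ℂ) •
        fun k => ∑ l, (g (h' i) l - g (h i) l) * b l k) := by
    ext k
    simp only [gradGh, hg, Pi.sub_apply, Pi.add_apply, Pi.smul_apply, smul_eq_mul, sub_mul,
      Finset.sum_sub_distrib, mul_assoc]
    ring
  have hgl : ∀ l, ‖g (h' i) l - g (h i) l‖ ≤ 34 / 3 * ‖vinner (b l) (h' i - h i)‖ := fun l => by
    have h1 := norm_G0'_smul_sub_le (E := ℂ) (c := (L : ℝ) / (8 * dd i * μ ^ 2)) (by positivity)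
      (z := vinner (b l) (h i)) (w := vinner (b l) (h' i))
      (by rw [div_mul_eq_mul_div]; exact hl l) (by rw [div_mul_eq_mul_div]; exact hl' l)
    have h2 : vinner (b l) (h' i - h i) = vinner (b l) (h' i) - vinner (b l) (h i) := by
      simp [vinner, mul_sub]
    rw [h2]
    simpa only [hg, div_mul_eq_mul_div, Complex.real_smul] using h1
  have hB : vnorm (fun k => ∑ l, (g (h' i) l - g (h i) l) * b l k)
      ≤ 34 / 3 * vnorm (h' i - h i) := by
    refine abs_le_of_sq_le_sq' ?_ (by have := vnorm_nonneg (h' i - h i); positivity) |>.2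
    rw [mul_pow, vnorm_sq, vnorm_sq, ← vnormSq_vinner_eq hb (h' i - h i)]
    refine (vnormSq_sum_mul_le hb _).trans ?_
    simp only [vnormSq, Finset.mul_sum, ← mul_pow]
    exact Finset.sum_le_sum fun l _ => pow_le_pow_left₀ (norm_nonneg _) (hgl l) 2
  have hc : 0 ≤ ρ / (2 * dd i) := by positivity
  have hc' : 0 ≤ (L : ℝ) / (4 * μ ^ 2) := by positivity
  rw [hsplit, vnorm_smul, Complex.norm_real, Real.norm_of_nonneg hc, mul_assoc]
  refine mul_le_mul_of_nonneg_left ((vnorm_add_le _ _).trans ?_) hc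
  rw [vnorm_smul, Complex.norm_real, Real.norm_of_nonneg hc', add_mul, mul_assoc]
  exact add_le_add (vnorm_G0'_smul_sub_le (by positivity) hh hh')
    (mul_le_mul_of_nonneg_left hB hc')

lemma pairNorm_gradG_sub_le {K N L s : ℕ} (hs : 0 < s) {b : Fin L → Fin K → ℂ} (hb : BtBeqI b)
    {ρ μ : ℝ} {d0 dd : Fin s → ℝ} (hρ : 0 ≤ ρ) (hd0 : ∀ i, 0 < d0 i)
    (hdd : ∀ i, 0.9 * d0 i ≤ dd i) {h h' : Fin s → Fin K → ℂ} {x x' : Fin s → Fin N → ℂ}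
    (hR : ∀ i, RegBounded b μ (dd i) (h i) (x i))
    (hR' : ∀ i, RegBounded b μ (dd i) (h' i) (x' i)) :
    pairNorm (fun i => gradGh b ρ μ dd h' i - gradGh b ρ μ dd h i)
        (fun i => gradGx ρ dd x' i - gradGx ρ dd x i)
      ≤ ρ / (⨅ i, d0 i) * (19 / 3 + 19 / 12 * (L / μ ^ 2)) * pairNorm (h' - h) (x' - x) := by
  have hm := iInf_pos_of_forall_pos hs hd0
  have hL : 0 ≤ (L : ℝ) / μ ^ 2 := by positivity
  have hcoef : ∀ i, ρ / (2 * dd i) * (34 / 3) ≤ ρ / (⨅ i, d0 i) * (19 / 3) := fun i => by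
    have h1 : ρ / (2 * dd i) ≤ ρ / ((⨅ i, d0 i) * (9 / 5)) :=
      div_le_div_of_nonneg_left hρ (by positivity) (by linarith [hdd i, iInf_le_apply d0 i])
    rw [← div_div ρ (⨅ i, d0 i)] at h1
    have h2 : 0 ≤ ρ / (⨅ i, d0 i) := by positivity
    generalize ρ / (2 * dd i) = p at *
    linarith
  have h59 : (9 / 5 : ℝ) ≤ 20 / 9 := by norm_num
  have hddpos : ∀ i, 0 < dd i := fun i => by linarith [hdd i, hd0 i]
  refine pairNorm_le_mul (by positivity) (fun i => ?_) fun i => ?_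
  · refine (vnorm_gradGh_sub_le hb hρ (hddpos i) ((hR i).left.trans h59) ((hR' i).left.trans h59)
      (fun l => ((hR i).coherence l).trans h59) fun l => ((hR' i).coherence l).trans h59).trans
      (mul_le_mul_of_nonneg_right ?_ (vnorm_nonneg _))
    rw [show ρ / (2 * dd i) * (34 / 3 + L / (4 * μ ^ 2) * (34 / 3))
      = ρ / (2 * dd i) * (34 / 3) * (1 + L / μ ^ 2 / 4) by rw [div_div]; ring]
    refine (mul_le_mul_of_nonneg_right (hcoef i) (by positivity)).trans_eq (by ring)
  · refine (vnorm_gradGx_sub_le hρ (hddpos i) ((hR i).right.trans h59)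
      ((hR' i).right.trans h59)).trans (mul_le_mul_of_nonneg_right ?_ (vnorm_nonneg _))
    refine (hcoef i).trans (mul_le_mul_of_nonneg_left ?_ (by positivity))
    linarith

/-! ### The data-fidelity term -/

lemma residual_eq {K N L s : ℕ} (b : Fin L → Fin K → ℂ) (a : Fin s → Fin L → Fin N → ℂ)
    (h0 : Fin s → Fin K → ℂ) (x0 : Fin s → Fin N → ℂ) (e : Fin L → ℂ)
    (h : Fin s → Fin K → ℂ) (x : Fin s → Fin N → ℂ) :
    residual b a h0 x0 e h x = calA b a (Hmap h x - Hmap h0 x0) - e := by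
  ext l
  simp only [residual, yvec, calA_sub, Pi.sub_apply]
  ring

lemma residual_sub_residual {K N L s : ℕ} (b : Fin L → Fin K → ℂ)
    (a : Fin s → Fin L → Fin N → ℂ) (h0 : Fin s → Fin K → ℂ) (x0 : Fin s → Fin N → ℂ)
    (e : Fin L → ℂ) (h h' : Fin s → Fin K → ℂ) (x x' : Fin s → Fin N → ℂ) :
    residual b a h0 x0 e h' x' - residual b a h0 x0 e h x = calA b a (Hmap h' x' - Hmap h x) := by
  rw [residual_eq, residual_eq, calA_sub, calA_sub, calA_sub]
  abel

lemma famFrobSq_Hmap_sub_le {K N s : ℕ} {h h' : Fin s → Fin K → ℂ} {x x' : Fin s → Fin N → ℂ}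
    {D : ℝ} (hh : ∀ i, vnormSq (h i) ≤ D) (hx' : ∀ i, vnormSq (x' i) ≤ D) :
    famFrobSq (Hmap h' x' - Hmap h x) ≤ 2 * D * pairNorm (h' - h) (x' - x) ^ 2 := by
  rw [pairNorm_sq, ← Finset.sum_add_distrib, Finset.mul_sum, famFrobSq]
  refine Finset.sum_le_sum fun i _ => ?_
  have hsplit : (Hmap h' x' - Hmap h x) i
      = rankOne (h' i - h i) (x' i) + rankOne (h i) (x' i - x i) := by
    ext k j
    simp only [Hmap, rankOne, Pi.sub_apply, Matrix.sub_apply, Matrix.add_apply, Matrix.of_apply,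
      map_sub]
    ring
  rw [hsplit]
  refine (frobSq_add_le _ _).trans ?_
  rw [frobSq_rankOne, frobSq_rankOne, Pi.sub_apply, Pi.sub_apply]
  nlinarith [mul_le_mul_of_nonneg_left (hx' i) (vnormSq_nonneg (h' i - h i)),
    mul_le_mul_of_nonneg_right (hh i) (vnormSq_nonneg (x' i - x i))]

lemma famFrob_Hmap_sub_le_of_inNeps {K N s : ℕ} {h0 : Fin s → Fin K → ℂ}
    {x0 : Fin s → Fin N → ℂ} {d0 : Fin s → ℝ} {ε : ℝ} (hd0 : ∀ i, 0 < d0 i) (hε : 0 ≤ ε)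
    {h : Fin s → Fin K → ℂ} {x : Fin s → Fin N → ℂ} (hN : inNeps h0 x0 d0 ε h x) :
    famFrob (Hmap h x - Hmap h0 x0) ≤ ε * dtot d0 := by
  refine Real.sqrt_le_iff.2 ⟨mul_nonneg hε (Real.sqrt_nonneg _), ?_⟩
  rw [mul_pow, dtot_sq, Finset.mul_sum]
  refine Finset.sum_le_sum fun i _ => ?_
  have h1 := (div_le_iff₀ (hd0 i)).1 (hN i)
  rw [← mul_pow]
  exact (Real.sqrt_le_iff.1 h1).2

section Fidelity

variable {K N L s : ℕ} (b : Fin L → Fin K → ℂ) (a : Fin s → Fin L → Fin N → ℂ)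

lemma pairNorm_calAdj_mulVec_le_of_vnormSq_le (z : Fin L → ℂ) {h : Fin s → Fin K → ℂ}
    {x : Fin s → Fin N → ℂ} {D : ℝ} (hD : 0 ≤ D)
    (hh : ∀ i, vnormSq (h i) ≤ D) (hx : ∀ i, vnormSq (x i) ≤ D) :
    pairNorm (fun i => (calAdj b (a i) z).mulVec (x i))
        (fun i => (calAdj b (a i) z).conjTranspose.mulVec (h i)) ^ 2
      ≤ 2 * D * (calAOpNorm b a ^ 2 * vnormSq z) := by
  refine le_trans ?_ (mul_le_mul_of_nonneg_left (famFrobSq_calAdj_le b a z) (by positivity))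
  rw [pairNorm_sq, ← Finset.sum_add_distrib, famFrobSq, Finset.mul_sum]
  refine Finset.sum_le_sum fun i _ => ?_
  have h1 := vnormSq_mulVec_le (calAdj b (a i) z) (x i)
  have h2 := vnormSq_mulVec_le (calAdj b (a i) z).conjTranspose (h i)
  rw [frobSq_conjTranspose] at h2
  have h3 := frobSq_nonneg (calAdj b (a i) z)
  nlinarith [mul_le_mul_of_nonneg_left (hx i) h3, mul_le_mul_of_nonneg_left (hh i) h3]

lemma pairNorm_calAdj_mulVec_le (z : Fin L → ℂ) (u : Fin s → Fin K → ℂ)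
    (v : Fin s → Fin N → ℂ) :
    pairNorm (fun i => (calAdj b (a i) z).mulVec (v i))
        (fun i => (calAdj b (a i) z).conjTranspose.mulVec (u i))
      ≤ calAOpNorm b a * vnorm z * pairNorm v u := by
  have hC : 0 ≤ calAOpNorm b a * vnorm z := mul_nonneg (calAOpNorm_nonneg b a) (vnorm_nonneg z)
  have hM : ∀ i, frobSq (calAdj b (a i) z) ≤ (calAOpNorm b a * vnorm z) ^ 2 := fun i => by
    rw [mul_pow, vnorm_sq]
    exact (frobSq_le_famFrobSq (fun i => calAdj b (a i) z) i).trans (famFrobSq_calAdj_le b a z)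
  refine pairNorm_le_mul hC (fun i => ?_) fun i => ?_
  all_goals
    refine abs_le_of_sq_le_sq' ?_ (mul_nonneg hC (vnorm_nonneg _)) |>.2
    rw [mul_pow, vnorm_sq, vnorm_sq]
    refine (vnormSq_mulVec_le _ _).trans (mul_le_mul_of_nonneg_right ?_ (vnormSq_nonneg _))
  · exact hM i
  · rw [frobSq_conjTranspose]
    exact hM i

lemma pairNorm_comm (u : Fin s → Fin K → ℂ) (v : Fin s → Fin N → ℂ) :
    pairNorm u v = pairNorm v u := by
  rw [pairNorm, pairNorm, add_comm]

lemma pairNorm_gradF_sub_le (h0 : Fin s → Fin K → ℂ) (x0 : Fin s → Fin N → ℂ) (e : Fin L → ℂ)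
    {h h' : Fin s → Fin K → ℂ} {x x' : Fin s → Fin N → ℂ} {D : ℝ} (hD : 0 ≤ D)
    (hh : ∀ i, vnormSq (h i) ≤ D) (hh' : ∀ i, vnormSq (h' i) ≤ D)
    (hx' : ∀ i, vnormSq (x' i) ≤ D) :
    pairNorm (fun i => gradFh b a h0 x0 e h' x' i - gradFh b a h0 x0 e h x i)
        (fun i => gradFx b a h0 x0 e h' x' i - gradFx b a h0 x0 e h x i)
      ≤ (2 * D * calAOpNorm b a ^ 2 + calAOpNorm b a * vnorm (residual b a h0 x0 e h x))
        * pairNorm (h' - h) (x' - x) := by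
  set r := residual b a h0 x0 e h x with hr
  set z := residual b a h0 x0 e h' x' - r with hz
  have hr' : residual b a h0 x0 e h' x' = z + r := by rw [hz]; abel
  have hadd : ∀ i, calAdj b (a i) (z + r) = calAdj b (a i) z + calAdj b (a i) r := fun i => by
    ext k j
    simp [calAdj, add_mul, Finset.sum_add_distrib]
  have e1 : (fun i => gradFh b a h0 x0 e h' x' i - gradFh b a h0 x0 e h x i)
      = (fun i => (calAdj b (a i) z).mulVec (x' i))
        + fun i => (calAdj b (a i) r).mulVec ((x' - x) i) := by
    funext i
    simp only [gradFh, ← hr, hr', hadd, Matrix.add_mulVec, Pi.add_apply, Pi.sub_apply,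
      Matrix.mulVec_sub]
    abel
  have e2 : (fun i => gradFx b a h0 x0 e h' x' i - gradFx b a h0 x0 e h x i)
      = (fun i => (calAdj b (a i) z).conjTranspose.mulVec (h' i))
        + fun i => (calAdj b (a i) r).conjTranspose.mulVec ((h' - h) i) := by
    funext i
    simp only [gradFx, ← hr, hr', hadd, Matrix.conjTranspose_add, Matrix.add_mulVec, Pi.add_apply,
      Pi.sub_apply, Matrix.mulVec_sub]
    abel
  rw [e1, e2, add_mul]
  refine (pairNorm_add_le _ _ _ _).trans (add_le_add ?_ ?_)
  · have hp := pairNorm_nonneg (h' - h) (x' - x)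
    refine abs_le_of_sq_le_sq' ?_ (by positivity) |>.2
    have h2 : vnormSq z
        ≤ calAOpNorm b a ^ 2 * (2 * D * pairNorm (h' - h) (x' - x) ^ 2) := by
      rw [hz, hr, residual_sub_residual]
      exact (vnormSq_calA_le b a _).trans
        (mul_le_mul_of_nonneg_left (famFrobSq_Hmap_sub_le hh hx') (sq_nonneg _))
    refine (pairNorm_calAdj_mulVec_le_of_vnormSq_le b a z hD hh' hx').trans ?_
    calc 2 * D * (calAOpNorm b a ^ 2 * vnormSq z)
        ≤ 2 * D * (calAOpNorm b a ^ 2 *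
          (calAOpNorm b a ^ 2 * (2 * D * pairNorm (h' - h) (x' - x) ^ 2))) := by gcongr
      _ = (2 * D * calAOpNorm b a ^ 2 * pairNorm (h' - h) (x' - x)) ^ 2 := by ring
  · rw [pairNorm_comm (h' - h)]
    exact pairNorm_calAdj_mulVec_le b a r (h' - h) (x' - x)

lemma vnorm_residual_le {h0 : Fin s → Fin K → ℂ} {x0 : Fin s → Fin N → ℂ} (e : Fin L → ℂ)
    {d0 : Fin s → ℝ} {ε : ℝ} (hd0 : ∀ i, 0 < d0 i) (hε : 0 ≤ ε) {h : Fin s → Fin K → ℂ}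
    {x : Fin s → Fin N → ℂ} (hN : inNeps h0 x0 d0 ε h x) :
    vnorm (residual b a h0 x0 e h x) ≤ calAOpNorm b a * (ε * dtot d0) + vnorm e := by
  rw [residual_eq]
  refine (vnorm_sub_le _ _).trans (add_le_add_left ((vnorm_calA_le b a _).trans ?_) _)
  exact mul_le_mul_of_nonneg_left (famFrob_Hmap_sub_le_of_inNeps hd0 hε hN)
    (calAOpNorm_nonneg b a)

end Fidelity

/-- local smoothness of `∇F̃`. -/
theorem statement15
    {K N L s : ℕ} (hK : 0 < K) (hN : 0 < N) (hL : 0 < L) (hs : 0 < s)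
    (b : Fin L → Fin K → ℂ) (hb : BtBeqI b)
    (a : Fin s → Fin L → Fin N → ℂ)
    (h0 : Fin s → Fin K → ℂ) (x0 : Fin s → Fin N → ℂ)
    (d0 : Fin s → ℝ) (hd0 : ∀ i, 0 < d0 i)
    (hh0 : ∀ i, vnorm (h0 i) = Real.sqrt (d0 i))
    (hx0 : ∀ i, vnorm (x0 i) = Real.sqrt (d0 i))
    (e : Fin L → ℂ) (μ ρ d ε : ℝ) (dd : Fin s → ℝ)
    (hμ : 0 < μ) (hε : 0 < ε) (hε15 : ε ≤ 1 / 15)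
    (hdd : ∀ i, 0.9 * d0 i ≤ dd i ∧ dd i ≤ 1.1 * d0 i)
    (hdlow : 0.9 * dtot d0 ≤ d) (hdhigh : d ≤ 1.1 * dtot d0)
    (hρ : d ^ 2 + 2 * vnormSq e ≤ ρ)
    (hRIP : LocalRIP b a h0 x0 d0 μ ε)
    (hAe : AadjNorm b a e ≤ ε * dtot d0 / (10 * Real.sqrt 2 * (s : ℝ) * kappa d0))
    (hAop : 1 ≤ calAOpNorm b a) :
    ∀ (h : Fin s → Fin K → ℂ) (x : Fin s → Fin N → ℂ)
      (u : Fin s → Fin K → ℂ) (v : Fin s → Fin N → ℂ),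
      inNeps h0 x0 d0 ε h x → inNF b a h0 x0 e d0 ρ μ dd ε h x →
      inNeps h0 x0 d0 ε (fun i k => h i k + u i k) (fun i j => x i j + v i j) →
      inNF b a h0 x0 e d0 ρ μ dd ε (fun i k => h i k + u i k) (fun i j => x i j + v i j) →
      Real.sqrt (gradDiffNormSq b a h0 x0 e ρ μ dd h x
          (fun i k => h i k + u i k) (fun i j => x i j + v i j))
        ≤ (10 * calAOpNorm b a ^ 2 * dtot d0
            + 2 * ρ / (⨅ i, d0 i) * (5 + 2 * (L : ℝ) / μ ^ 2)) * pairNorm u v := by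
  intro h x u v hN hF _ hF'
  set h' : Fin s → Fin K → ℂ := fun i k => h i k + u i k with hh'
  set x' : Fin s → Fin N → ℂ := fun i j => x i j + v i j with hx'
  have hu : h' - h = u := by
    ext i k
    simp [hh']
  have hv : x' - x = v := by
    ext i j
    simp [hx']
  have hdpos : 0 < dtot d0 := (hd0 ⟨0, hs⟩).trans_le (le_dtot d0 _)
  have hmpos := iInf_pos_of_forall_pos hs hd0
  have he := vnormSq_nonneg e
  have hρ1 : 0.81 * dtot d0 ^ 2 + 2 * vnormSq e ≤ ρ := by nlinarith
  have hρ0 : 0 ≤ ρ := by nlinarith [sq_nonneg (dtot d0)]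
  have hR := regBounded_of_inNF hs hd0 hε hε15 hρ1 hF
  have hR' := regBounded_of_inNF hs hd0 hε hε15 hρ1 hF'
  have hbound : ∀ i {t : ℝ}, t / (2 * dd i) ≤ 9 / 5 → t ≤ 4 * dtot d0 := fun i t ht => by
    have h1 := hdd i
    have h2 := hd0 i
    rw [div_le_iff₀ (by linarith)] at ht
    linarith [le_dtot d0 i]
  have hFid := pairNorm_gradF_sub_le b a h0 x0 e (h := h) (h' := h') (x := x) (x' := x')
    (D := 4 * dtot d0) (by positivity) (fun i => hbound i (hR i).left)
    (fun i => hbound i (hR' i).left) (fun i => hbound i (hR' i).right)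
  have hReg := pairNorm_gradG_sub_le hs hb hρ0 hd0 (fun i => (hdd i).1) hR hR'
  rw [hu, hv] at hFid hReg
  set A := calAOpNorm b a with hA
  have hA0 : 0 ≤ A := calAOpNorm_nonneg b a
  have hp := pairNorm_nonneg u v
  have hres : A * vnorm (residual b a h0 x0 e h x)
      ≤ A ^ 2 * dtot d0 + ρ / (⨅ i, d0 i) := by
    have h1 := mul_le_mul_of_nonneg_left (vnorm_residual_le b a e hd0 hε.le hN) hA0
    have h2 : A * vnorm e ≤ A ^ 2 * dtot d0 / 2 + ρ / (⨅ i, d0 i) := by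
      have h3 : vnormSq e / dtot d0 ≤ ρ / (⨅ i, d0 i) :=
        div_le_div₀ hρ0 (by nlinarith [sq_nonneg (dtot d0)]) hmpos
          ((iInf_le_apply d0 ⟨0, hs⟩).trans (le_dtot d0 _))
      have h4 : 2 * (A * vnorm e) ≤ A ^ 2 * dtot d0 + vnormSq e / dtot d0 := by
        rw [← vnorm_sq, ← sub_nonneg]
        have : A ^ 2 * dtot d0 + vnorm e ^ 2 / dtot d0 - 2 * (A * vnorm e)
            = (A * dtot d0 - vnorm e) ^ 2 / dtot d0 := by
          field_simp
          ring
        rw [this]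
        positivity
      have h5 : 0 ≤ ρ / (⨅ i, d0 i) := by positivity
      linarith
    have h6 : A ^ 2 * dtot d0 * ε ≤ A ^ 2 * dtot d0 * (1 / 15) :=
      mul_le_mul_of_nonneg_left hε15 (by positivity)
    have h7 : 0 ≤ A ^ 2 * dtot d0 := by positivity
    rw [← hA] at h1
    nlinarith
  have hsum : Real.sqrt (gradDiffNormSq b a h0 x0 e ρ μ dd h x h' x')
      = pairNorm ((fun i => gradFh b a h0 x0 e h' x' i - gradFh b a h0 x0 e h x i)
          + fun i => gradGh b ρ μ dd h' i - gradGh b ρ μ dd h i)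
        ((fun i => gradFx b a h0 x0 e h' x' i - gradFx b a h0 x0 e h x i)
          + fun i => gradGx ρ dd x' i - gradGx ρ dd x i) := by
    rw [gradDiffNormSq, pairNorm]
    congr 3 <;> ext i <;> congr 1 <;> ext k <;>
      simp only [gradH, gradX, Pi.add_apply, Pi.sub_apply] <;> ring
  rw [hsum]
  refine (pairNorm_add_le _ _ _ _).trans ((add_le_add hFid hReg).trans ?_)
  rw [← add_mul]
  refine mul_le_mul_of_nonneg_right ?_ hp
  have h8 : 0 ≤ ρ / (⨅ i, d0 i) := by positivity
  have h9 : 0 ≤ ρ / (⨅ i, d0 i) * (L / μ ^ 2) := by positivity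
  have h10 : 2 * ρ / (⨅ i, d0 i) * (5 + 2 * (L : ℝ) / μ ^ 2)
      = 10 * (ρ / (⨅ i, d0 i)) + 4 * (ρ / (⨅ i, d0 i) * (L / μ ^ 2)) := by ring
  have h11 : 0 ≤ A ^ 2 * dtot d0 := by positivity
  rw [h10]
  linarith

end RGD
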